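/- Suppose T is a countable complete theory that is not ℵ₀-categorical and has only finitely many countable models up to isomorphism. Then there exist a finite tuple ā and a prime model M over ā such that tp(ā) is not isolated and every complete n-type of T over ∅ (for every n < ω) is realized in M; moreover, there is a tuple b̄ in M such that tp(b̄) = tp(ā) and tp(ā/b̄) is not isolated. -/

import Mathlib

open FirstOrder Cardinal

namespace KimPaper

/-- A first-order formula in `n` free variables together with a tuple of
parameters from `M`. -/
def FP (L : FirstOrder.Language.{0, 0}) (M : Type) (n : ℕ) : Type :=
  Σ k : ℕ, L.Formula (Fin n ⊕ Fin k) × (Fin k → M)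

/-- Realization of a formula-with-parameters by a tuple. -/
def FP.Realize {L : FirstOrder.Language.{0, 0}} {M : Type} [L.Structure M] {n : ℕ}
    (F : FP L M n) (a : Fin n → M) : Prop :=
  F.2.1.Realize (Sum.elim a F.2.2)

/-- All parameters of the formula-with-parameters `F` lie in the set `A`. -/
def FP.ParamsIn {L : FirstOrder.Language.{0, 0}} {M : Type} {n : ℕ}
    (F : FP L M n) (A : Set M) : Prop :=
  ∀ i, F.2.2 i ∈ A

/-- The tuples `a` and `b` have the same complete type over the set `A`
(i.e. `tp(a/A) = tp(b/A)`). -/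
def SameType (L : FirstOrder.Language.{0, 0}) {M : Type} [L.Structure M]
    (A : Set M) {n : ℕ} (a b : Fin n → M) : Prop :=
  ∀ (k : ℕ) (φ : L.Formula (Fin n ⊕ Fin k)) (c : Fin k → M),
    (∀ i, c i ∈ A) → (φ.Realize (Sum.elim a c) ↔ φ.Realize (Sum.elim b c))

/-- The complete type of the tuple `a` over the set `A`: the collection of all
formulas with parameters in `A` realized by `a`. -/
def Tp (L : FirstOrder.Language.{0, 0}) {M : Type} [L.Structure M]
    (A : Set M) {n : ℕ} (a : Fin n → M) : Set (FP L M n) :=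
  {F | F.ParamsIn A ∧ F.Realize a}

/-- The (partial) type `p` entails the formula-with-parameters `F`. -/
def Entails {L : FirstOrder.Language.{0, 0}} {M : Type} [L.Structure M] {n : ℕ}
    (p : Set (FP L M n)) (F : FP L M n) : Prop :=
  ∀ a : Fin n → M, (∀ G ∈ p, G.Realize a) → F.Realize a

/-- The (partial) type `p` forks over the set `A`: there are a formula
`φ(x̄, ȳ)`, tuples `c i` all having the same type over `A`, and `k < ω` such
that `p ⊢ φ(x̄, c 0)` and `{φ(x̄, c i) | i < ω}` is `k`-inconsistent. -/
def ForksOver {L : FirstOrder.Language.{0, 0}} {M : Type} [L.Structure M] {n : ℕ}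
    (p : Set (FP L M n)) (A : Set M) : Prop :=
  ∃ (m : ℕ) (φ : L.Formula (Fin n ⊕ Fin m)) (c : ℕ → Fin m → M) (k : ℕ),
    (∀ i : ℕ, SameType L A (c i) (c 0)) ∧
    Entails p ⟨m, (φ, c 0)⟩ ∧
    ∀ s : Finset ℕ, s.card = k →
      ¬ ∃ a : Fin n → M, ∀ i ∈ s, φ.Realize (Sum.elim a (c i))

/-- The family of sets `C` is independent over `A`: for every `i` and every
tuple `c` from `C i`, `tp(c / A ∪ ⋃_{j ≠ i} C j)` does not fork over `A`. -/
def IndepFamily (L : FirstOrder.Language.{0, 0}) {M : Type} [L.Structure M]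
    {ι : Type} (A : Set M) (C : ι → Set M) : Prop :=
  ∀ (i : ι) (n : ℕ) (c : Fin n → M), (∀ j, c j ∈ C i) →
    ¬ ForksOver (Tp L (A ∪ ⋃ (j : ι) (_ : j ≠ i), C j) c) A

/-- The tuples `a` and `b` have the same complete type over `∅`. -/
def TpEq (L : FirstOrder.Language.{0, 0}) {M : Type} [L.Structure M] {n : ℕ}
    (a b : Fin n → M) : Prop :=
  ∀ ψ : L.Formula (Fin n), ψ.Realize a ↔ ψ.Realize b

/-- `tp(a/b)` is isolated: some formula `φ(x̄, b)` realized by `a` implies every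
formula over `b` realized by `a`. -/
def IsolatedOver (L : FirstOrder.Language.{0, 0}) {M : Type} [L.Structure M]
    {n m : ℕ} (a : Fin n → M) (b : Fin m → M) : Prop :=
  ∃ φ : L.Formula (Fin n ⊕ Fin m), φ.Realize (Sum.elim a b) ∧
    ∀ a' : Fin n → M, φ.Realize (Sum.elim a' b) →
      ∀ ψ : L.Formula (Fin n ⊕ Fin m),
        ψ.Realize (Sum.elim a b) → ψ.Realize (Sum.elim a' b)

/-- `tp(a/b)` is semi-isolated: some formula `φ(x̄, b)` realized by `a` implies
`tp(a)` (the complete type of `a` over `∅`). -/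
def SemiIsolatedOver (L : FirstOrder.Language.{0, 0}) {M : Type} [L.Structure M]
    {n m : ℕ} (a : Fin n → M) (b : Fin m → M) : Prop :=
  ∃ φ : L.Formula (Fin n ⊕ Fin m), φ.Realize (Sum.elim a b) ∧
    ∀ a' : Fin n → M, φ.Realize (Sum.elim a' b) →
      ∀ ψ : L.Formula (Fin n), ψ.Realize a → ψ.Realize a'

/-- `tp(a)` (over `∅`) is isolated. -/
def Isolated0 (L : FirstOrder.Language.{0, 0}) {M : Type} [L.Structure M]
    {n : ℕ} (a : Fin n → M) : Prop :=
  ∃ φ : L.Formula (Fin n), φ.Realize a ∧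
    ∀ a' : Fin n → M, φ.Realize a' →
      ∀ ψ : L.Formula (Fin n), ψ.Realize a → ψ.Realize a'

/-- `M` is `κ`-saturated: every finitely satisfiable set of formulas over a
parameter set of size `< κ` is realized in `M`. -/
def Saturated (L : FirstOrder.Language.{0, 0}) (M : Type) [L.Structure M]
    (κ : Cardinal.{0}) : Prop :=
  ∀ (n : ℕ) (A : Set M) (p : Set (FP L M n)),
    #A < κ → (∀ F ∈ p, F.ParamsIn A) →
    (∀ s : Finset (FP L M n), ↑s ⊆ p → ∃ a : Fin n → M, ∀ F ∈ s, F.Realize a) →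
    ∃ a : Fin n → M, ∀ F ∈ p, F.Realize a

/-- `M` is strongly `κ`-homogeneous: every partial elementary map defined on a
set of size `< κ` extends to an automorphism of `M`. -/
def StronglyHomogeneous (L : FirstOrder.Language.{0, 0}) (M : Type) [L.Structure M]
    (κ : Cardinal.{0}) : Prop :=
  ∀ (A : Set M) (f : M → M), #A < κ →
    (∀ (n : ℕ) (φ : L.Formula (Fin n)) (a : Fin n → M), (∀ i, a i ∈ A) →
      (φ.Realize a ↔ φ.Realize (f ∘ a))) →
    ∃ σ : M ≃[L] M, ∀ x ∈ A, σ x = f x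

/-- `M` is a simple structure: every complete type over a set `B` does not fork
over some subset `A ⊆ B` of size at most `|T| = |L| + ℵ₀`. -/
def SimpleStruct (L : FirstOrder.Language.{0, 0}) (M : Type) [L.Structure M] : Prop :=
  ∀ (n : ℕ) (B : Set M) (a : Fin n → M),
    ∃ A : Set M, A ⊆ B ∧ #A ≤ L.card + ℵ₀ ∧ ¬ ForksOver (Tp L B a) A

/-- `M` is a supersimple structure: every complete type over a set `B` does not
fork over some finite subset of `B`. -/
def SupersimpleStruct (L : FirstOrder.Language.{0, 0}) (M : Type) [L.Structure M] : Prop :=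
  ∀ (n : ℕ) (B : Set M) (a : Fin n → M),
    ∃ A : Set M, A ⊆ B ∧ A.Finite ∧ ¬ ForksOver (Tp L B a) A


/-- The setoid of countably infinite models of `T` up to `L`-isomorphism. -/
def cmSetoid (L : FirstOrder.Language.{0, 0}) (T : L.Theory) :
    Setoid {N : Language.Theory.ModelType.{0, 0, 0} T // Countable N ∧ Infinite N} where
  r N₁ N₂ := Nonempty (N₁.1 ≃[L] N₂.1)
  iseqv := ⟨fun N => ⟨Language.Equiv.refl L N.1⟩,
    fun ⟨e⟩ => ⟨e.symm⟩,
    fun ⟨e⟩ ⟨f⟩ => ⟨f.comp e⟩⟩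

/-- The number of countably infinite models of `T`, counted up to isomorphism. -/
noncomputable def numCountableModels (L : FirstOrder.Language.{0, 0}) (T : L.Theory) :
    Cardinal.{1} :=
  #(Quotient (cmSetoid L T))

/-- The tuples `a` (in `M`) and `a'` (in `N`) have the same complete type over `∅`. -/
def TpEqCross (L : FirstOrder.Language.{0, 0}) {M N : Type} [L.Structure M] [L.Structure N]
    {n : ℕ} (a : Fin n → M) (a' : Fin n → N) : Prop :=
  ∀ ψ : L.Formula (Fin n), ψ.Realize a ↔ ψ.Realize a'

/-- `M` is a prime model over the tuple `a`: whenever `a'` is a tuple in a model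
`N` of `T` with `tp(a') = tp(a)`, there is an elementary embedding of `M` into
`N` sending `a` to `a'`. -/
def PrimeOver (L : FirstOrder.Language.{0, 0}) (T : L.Theory) (M : Type) [L.Structure M]
    {n : ℕ} (a : Fin n → M) : Prop :=
  ∀ (N : Language.Theory.ModelType.{0, 0, 0} T) (a' : Fin n → N),
    TpEqCross L a a' → ∃ g : M ↪ₑ[L] N, ∀ i, g (a i) = a' i

end KimPaper
open FirstOrder Cardinal

namespace KimPaper

open Language

section Basic

variable {L : FirstOrder.Language.{0, 0}} {M N : Type} [L.Structure M] [L.Structure N]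
  {α β γ δ : Type}

/-- Two tuples (indexed by an arbitrary type) have the same type. -/
def TE (L : FirstOrder.Language.{0, 0}) {M N : Type} [L.Structure M] [L.Structure N]
    {γ : Type} (u : γ → M) (u' : γ → N) : Prop :=
  ∀ ψ : L.Formula γ, ψ.Realize u ↔ ψ.Realize u'

def IsoBy {L : FirstOrder.Language.{0, 0}} {M : Type} [L.Structure M]
    {α β : Type} (φ : L.Formula (α ⊕ β)) (v : α → M) (w : β → M) : Prop :=
  φ.Realize (Sum.elim v w) ∧
    ∀ v' : α → M, φ.Realize (Sum.elim v' w) →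
      ∀ ψ : L.Formula (α ⊕ β),
        ψ.Realize (Sum.elim v w) → ψ.Realize (Sum.elim v' w)

def Iso (L : FirstOrder.Language.{0, 0}) {M : Type} [L.Structure M]
    {α β : Type} (v : α → M) (w : β → M) : Prop :=
  ∃ φ : L.Formula (α ⊕ β), IsoBy φ v w

theorem TE.of_imp {u : γ → M} {u' : γ → N}
    (h : ∀ ψ : L.Formula γ, ψ.Realize u → ψ.Realize u') : TE L u u' := fun ψ =>
  ⟨h ψ, fun h' => by
    by_contra hc
    exact h ψ.not (by simpa using hc) h'⟩

theorem TE.symm {u : γ → M} {u' : γ → N} (h : TE L u u') : TE L u' u := fun ψ => (h ψ).symm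

theorem TE.trans {P : Type} [L.Structure P] {u : γ → M} {u' : γ → N} {u'' : γ → P}
    (h : TE L u u') (h' : TE L u' u'') : TE L u u'' := fun ψ => (h ψ).trans (h' ψ)

theorem TE.comp {u : γ → M} {u' : γ → N} (h : TE L u u') (f : δ → γ) :
    TE L (u ∘ f) (u' ∘ f) := fun ψ => by
  simpa using h (ψ.relabel f)

/-- Isolating formulas transfer across models. -/
theorem IsoBy.key [Finite α] {φ : L.Formula (α ⊕ β)} {v : α → M} {w : β → M}
    (h : IsoBy φ v w) {w' : β → N} (hw : TE L w w') {v' : α → N}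
    (hv : φ.Realize (Sum.elim v' w')) : TE L (Sum.elim v w) (Sum.elim v' w') := by
  apply TE.of_imp
  intro ψ hψ
  have := (hw (((φ.imp ψ).relabel Sum.swap).iAlls α)).1 (by
    rw [Formula.realize_iAlls]
    intro i
    have : (fun a => Sum.elim w i a) ∘ Sum.swap = Sum.elim i w := by
      ext x; cases x <;> rfl
    rw [Formula.realize_relabel, this, Formula.realize_imp]
    intro hi
    exact h.2 i hi ψ hψ)
  rw [Formula.realize_iAlls] at this
  have h2 := this v'
  have e : (fun a => Sum.elim w' v' a) ∘ Sum.swap = Sum.elim v' w' := by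
    ext x; cases x <;> rfl
  rw [Formula.realize_relabel, e, Formula.realize_imp] at h2
  exact h2 hv

/-- Existential transfer. -/
theorem TE.exists [Finite α] {w : β → M} {w' : β → N} (hw : TE L w w')
    (φ : L.Formula (α ⊕ β)) {v : α → M} (hv : φ.Realize (Sum.elim v w)) :
    ∃ v' : α → N, φ.Realize (Sum.elim v' w') := by
  have := (hw ((φ.relabel Sum.swap).iExs α)).1 (by
    rw [Formula.realize_iExs]
    refine ⟨v, ?_⟩
    have e : (fun a => Sum.elim w v a) ∘ Sum.swap = Sum.elim v w := by
      ext x; cases x <;> rfl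
    rw [Formula.realize_relabel, e]
    exact hv)
  rw [Formula.realize_iExs] at this
  obtain ⟨v', h⟩ := this
  refine ⟨v', ?_⟩
  have e : (fun a => Sum.elim w' v' a) ∘ Sum.swap = Sum.elim v' w' := by
    ext x; cases x <;> rfl
  rw [Formula.realize_relabel, e] at h
  exact h

theorem Iso.ext [Finite α] {v : α → M} {w : β → M} (h : Iso L v w) {w' : β → N}
    (hw : TE L w w') : ∃ v' : α → N, TE L (Sum.elim v w) (Sum.elim v' w') := by
  obtain ⟨φ, hφ⟩ := h
  obtain ⟨v', hv'⟩ := hw.exists φ hφ.1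
  exact ⟨v', hφ.key hw hv'⟩

theorem Iso.of_TE [Finite α] {v : α → M} {w : β → M} (h : Iso L v w) {v' : α → N} {w' : β → N}
    (ht : TE L (Sum.elim v w) (Sum.elim v' w')) : Iso L v' w' := by
  obtain ⟨φ, hφ⟩ := h
  have hw : TE L w w' := ht.comp Sum.inr
  refine ⟨φ, (ht φ).1 hφ.1, fun v'' h'' ψ hψ => ?_⟩
  exact (hφ.key hw h'' ψ).1 ((ht ψ).2 hψ)

theorem Iso.trans [Finite α] [Finite γ] {u : α → M} {v : γ → M} {w : β → M}
    (h1 : Iso L u (Sum.elim v w)) (h2 : Iso L v w) : Iso L (Sum.elim u v) w := by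
  obtain ⟨φ, hφ⟩ := h1
  obtain ⟨θ, hθ⟩ := h2
  have e1 : ∀ (u : α → M) (v : γ → M), Sum.elim (Sum.elim u v) w ∘ (Equiv.sumAssoc α γ β).symm
      = Sum.elim u (Sum.elim v w) := by
    intro u v; ext x; rcases x with x | x | x <;> rfl
  have e2 : ∀ (u : α → M) (v : γ → M), Sum.elim (Sum.elim u v) w ∘
      (Sum.map Sum.inr id : γ ⊕ β → (α ⊕ γ) ⊕ β) = Sum.elim v w := by
    intro u v; ext x; rcases x with x | x <;> rfl
  refine ⟨(φ.relabel (Equiv.sumAssoc α γ β).symm) ⊓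
    (θ.relabel (Sum.map Sum.inr id)), ?_, ?_⟩
  · rw [Formula.realize_inf, Formula.realize_relabel, Formula.realize_relabel, e1, e2]
    exact ⟨hφ.1, hθ.1⟩
  · intro x hx ψ hψ
    obtain ⟨u', v', rfl⟩ : ∃ u' v', x = Sum.elim u' v' :=
      ⟨x ∘ Sum.inl, x ∘ Sum.inr, (Sum.elim_comp_inl_inr x).symm⟩
    rw [Formula.realize_inf, Formula.realize_relabel, Formula.realize_relabel, e1, e2] at hx
    have t1 : TE L (Sum.elim v w) (Sum.elim v' w) := hθ.key (fun _ => Iff.rfl) hx.2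
    have t2 := (hφ.key t1 hx.1).comp (Equiv.sumAssoc α γ β)
    have e3 : ∀ (u : α → M) (v : γ → M), Sum.elim u (Sum.elim v w) ∘ (Equiv.sumAssoc α γ β)
      = Sum.elim (Sum.elim u v) w := by
      intro u v; ext x; rcases x with (x | x) | x <;> rfl
    rw [e3, e3] at t2
    exact (t2 ψ).1 hψ

theorem Iso.comp [Finite α] [Finite γ] {v : α → M} {w : β → M} (h : Iso L v w) (f : γ → α) :
    Iso L (v ∘ f) w := by
  obtain ⟨φ, hφ⟩ := h
  let χ : L.Formula ((γ ⊕ β) ⊕ α) :=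
    (φ.relabel (Sum.elim Sum.inr (fun b => Sum.inl (Sum.inr b)))) ⊓
    Formula.iInf (fun c : γ => Term.equal (Term.var (Sum.inl (Sum.inl c)))
      (Term.var (Sum.inr (f c))))
  have hχ : ∀ (x : γ → M) (y : α → M), χ.Realize (Sum.elim (Sum.elim x w) y) ↔
      φ.Realize (Sum.elim y w) ∧ x = y ∘ f := by
    intro x y
    have e : Sum.elim (Sum.elim x w) y ∘ (Sum.elim Sum.inr (fun b => Sum.inl (Sum.inr b)))
      = Sum.elim y w := by
      ext z; cases z <;> rfl
    simp only [χ, Formula.realize_inf, Formula.realize_relabel, e, Formula.realize_iInf,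
      Formula.realize_equal, Term.realize_var, Sum.elim_inl, Sum.elim_inr, funext_iff,
      Function.comp]
  refine ⟨χ.iExs α, ?_, ?_⟩
  · rw [Formula.realize_iExs]
    exact ⟨v, (hχ _ _).2 ⟨hφ.1, rfl⟩⟩
  · intro x hx ψ hψ
    rw [Formula.realize_iExs] at hx
    obtain ⟨y, hy⟩ := hx
    obtain ⟨hy1, rfl⟩ := (hχ _ _).1 hy
    have t := (hφ.key (fun _ => Iff.rfl) hy1).comp (Sum.map f id : γ ⊕ β → α ⊕ β)
    have e : ∀ y : α → M, Sum.elim y w ∘ Sum.map f id = Sum.elim (y ∘ f) w := by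
      intro y; ext z; cases z <;> rfl
    rw [e, e] at t
    exact (t ψ).1 hψ

theorem Iso.right {u : α → M} {v : γ → M} {w : β → M}
    (h : Iso L (Sum.elim u v) w) : Iso L u (Sum.elim v w) := by
  obtain ⟨φ, hφ⟩ := h
  have e3 : ∀ (u : α → M) (v : γ → M), Sum.elim u (Sum.elim v w) ∘ (Equiv.sumAssoc α γ β)
      = Sum.elim (Sum.elim u v) w := by
    intro u v; ext x; rcases x with (x | x) | x <;> rfl
  have e1 : ∀ (u : α → M) (v : γ → M), Sum.elim (Sum.elim u v) w ∘ (Equiv.sumAssoc α γ β).symm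
      = Sum.elim u (Sum.elim v w) := by
    intro u v; ext x; rcases x with x | x | x <;> rfl
  refine ⟨φ.relabel (Equiv.sumAssoc α γ β), ?_, ?_⟩
  · rw [Formula.realize_relabel, e3]; exact hφ.1
  · intro u' hu' ψ hψ
    rw [Formula.realize_relabel, e3] at hu'
    have := hφ.2 _ hu' (ψ.relabel (Equiv.sumAssoc α γ β).symm)
    rw [Formula.realize_relabel, Formula.realize_relabel, e1, e1] at this
    exact this hψ

theorem Iso.refl [Finite α] (w : β → M) (f : α → β) : Iso L (w ∘ f) w := by
  refine ⟨Formula.iInf (fun c : α => Term.equal (Term.var (Sum.inl c))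
      (Term.var (Sum.inr (f c)))), ?_, ?_⟩
  · simp [Formula.realize_iInf]
  · intro v' hv' ψ hψ
    have : v' = w ∘ f := by
      ext c
      simpa using (Formula.realize_iInf.1 hv') c
    rwa [this]

/-- Formulas over a larger parameter tuple: monotonicity. -/
theorem Iso.congr_right {v : α → M} {w : β → M} (h : Iso L v w) (e : γ ≃ β) :
    Iso L v (w ∘ e) := by
  obtain ⟨φ, hφ⟩ := h
  have e1 : ∀ v : α → M, Sum.elim v (w ∘ e) ∘ (Sum.map id e.symm) = Sum.elim v w := by
    intro v; ext z; cases z <;> simp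
  have e2 : ∀ v : α → M, Sum.elim v w ∘ (Sum.map id e) = Sum.elim v (w ∘ e) := by
    intro v; ext z; cases z <;> simp
  refine ⟨φ.relabel (Sum.map id e.symm), ?_, ?_⟩
  · rw [Formula.realize_relabel, e1]; exact hφ.1
  · intro v' hv' ψ hψ
    rw [Formula.realize_relabel, e1] at hv'
    have := hφ.2 _ hv' (ψ.relabel (Sum.map id e))
    rw [Formula.realize_relabel, Formula.realize_relabel, e2, e2] at this
    exact this hψ

/-- Every finite tuple is isolated over `a`. -/
def AtomicOver (L : FirstOrder.Language.{0, 0}) {M : Type} [L.Structure M] {n : ℕ}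
    (a : Fin n → M) : Prop :=
  ∀ (k : ℕ) (c : Fin k → M), Iso L c a

theorem AtomicOver.iso {n : ℕ} {a : Fin n → M} (h : AtomicOver L a) [Finite α] (v : α → M) :
    Iso L v a := by
  obtain ⟨k, ⟨e⟩⟩ := Finite.exists_equiv_fin α
  have := (h k (v ∘ e.symm)).comp e
  have h2 : (v ∘ e.symm) ∘ e = v := by ext; simp
  rwa [h2] at this

end Basic

end KimPaper

namespace KimPaper

open Language

section BackForth

variable {L : FirstOrder.Language.{0, 0}} {M N : Type} [L.Structure M] [L.Structure N]
  {α β γ δ : Type}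

/-- Finite partial elementary maps, fixing `a ↦ a'`. -/
def BFState (L : FirstOrder.Language.{0, 0}) {M N : Type} [L.Structure M] [L.Structure N]
    {n : ℕ} (a : Fin n → M) (a' : Fin n → N) : Type :=
  {P : Finset (M × N) // TE L (Sum.elim (fun x : P => x.1.1) a) (Sum.elim (fun x : P => x.1.2) a')}

instance {n : ℕ} (a : Fin n → M) (a' : Fin n → N) : Preorder (BFState L a a') :=
  Subtype.preorder _

theorem bf_step {n : ℕ} {a : Fin n → M} {a' : Fin n → N} (P : BFState L a a') (m : M) (y : N)
    (h : TE L (Sum.elim (fun _ : Unit => m) (Sum.elim (fun x : P.1 => x.1.1) a))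
      (Sum.elim (fun _ : Unit => y) (Sum.elim (fun x : P.1 => x.1.2) a'))) :
    ∃ Q : BFState L a a', P ≤ Q ∧ (m, y) ∈ Q.1 := by
  classical
  refine ⟨⟨insert (m, y) P.1, ?_⟩, Finset.subset_insert (m, y) P.1,
    Finset.mem_insert_self _ _⟩
  let f : (↥(insert (m, y) P.1) ⊕ Fin n) → Unit ⊕ (↥P.1 ⊕ Fin n) :=
    Sum.elim (fun x => if hx : x.1 ∈ P.1 then Sum.inr (Sum.inl ⟨x.1, hx⟩) else Sum.inl ())
      (fun i => Sum.inr (Sum.inr i))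
  have := h.comp f
  have e1 : Sum.elim (fun _ : Unit => m) (Sum.elim (fun x : P.1 => x.1.1) a) ∘ f =
      Sum.elim (fun x : ↥(insert (m, y) P.1) => x.1.1) a := by
    ext x
    rcases x with ⟨x, hx⟩ | i
    · by_cases h : x ∈ P.1
      · simp [f, h]
      · have : x = (m, y) := (Finset.mem_insert.1 hx).resolve_right h
        subst this
        simp [f, h]
    · rfl
  have e2 : Sum.elim (fun _ : Unit => y) (Sum.elim (fun x : P.1 => x.1.2) a') ∘ f =
      Sum.elim (fun x : ↥(insert (m, y) P.1) => x.1.2) a' := by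
    ext x
    rcases x with ⟨x, hx⟩ | i
    · by_cases h : x ∈ P.1
      · simp [f, h]
      · have : x = (m, y) := (Finset.mem_insert.1 hx).resolve_right h
        subst this
        simp [f, h]
    · rfl
  rwa [e1, e2] at this

theorem bf_forth {n : ℕ} {a : Fin n → M} {a' : Fin n → N} (ha : AtomicOver L a)
    (P : BFState L a a') (m : M) :
    ∃ Q : BFState L a a', P ≤ Q ∧ ∃ y, (m, y) ∈ Q.1 := by
  obtain ⟨v', hv'⟩ := (ha.iso (Sum.elim (fun _ : Unit => m) (fun x : P.1 => x.1.1))).right.ext P.2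
  obtain ⟨Q, h1, h2⟩ := bf_step P m (v' ()) hv'
  exact ⟨Q, h1, _, h2⟩

theorem bf_back {n : ℕ} {a : Fin n → M} {a' : Fin n → N} (ha : AtomicOver L a')
    (P : BFState L a a') (y : N) :
    ∃ Q : BFState L a a', P ≤ Q ∧ ∃ m, (m, y) ∈ Q.1 := by
  obtain ⟨v', hv'⟩ :=
    (ha.iso (Sum.elim (fun _ : Unit => y) (fun x : P.1 => x.1.2))).right.ext P.2.symm
  obtain ⟨Q, h1, h2⟩ := bf_step P (v' ()) y hv'.symm
  exact ⟨Q, h1, _, h2⟩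

/-- Common back-and-forth lemma. -/
theorem bf_main [Countable M] {n : ℕ} {a : Fin n → M} {a' : Fin n → N}
    (ha : AtomicOver L a) (h : TE L a a') (B : Set N) [Countable B]
    (hB : ∀ (P : BFState L a a') (y : N), y ∈ B →
      ∃ Q : BFState L a a', P ≤ Q ∧ ∃ m, (m, y) ∈ Q.1) :
    ∃ g : M ↪ₑ[L] N, (∀ i, g (a i) = a' i) ∧ B ⊆ Set.range g := by
  classical
  let _ : Encodable (M ⊕ B) := Encodable.ofCountable _
  let P0 : BFState L a a' := ⟨∅, by
    have := h.comp (Sum.elim (fun x : (∅ : Finset (M × N)) => (Finset.notMem_empty _ x.2).elim) id)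
    have e1 : a ∘ (Sum.elim (fun x : (∅ : Finset (M × N)) => (Finset.notMem_empty _ x.2).elim) id) =
        Sum.elim (fun x : (∅ : Finset (M × N)) => x.1.1) a := by
      ext x
      rcases x with ⟨x, hx⟩ | i
      · simp at hx
      · rfl
    have e2 : a' ∘ (Sum.elim (fun x : (∅ : Finset (M × N)) => (Finset.notMem_empty _ x.2).elim) id) =
        Sum.elim (fun x : (∅ : Finset (M × N)) => x.1.2) a' := by
      ext x
      rcases x with ⟨x, hx⟩ | i
      · simp at hx
      · rfl
    rwa [e1, e2] at this⟩
  let D : M ⊕ B → Order.Cofinal (BFState L a a') := Sum.elim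
    (fun m => ⟨{Q | ∃ y, (m, y) ∈ Q.1}, fun P => by
      obtain ⟨Q, h1, h2⟩ := bf_forth ha P m
      exact ⟨Q, h2, h1⟩⟩)
    (fun y => ⟨{Q | ∃ m, (m, y.1) ∈ Q.1}, fun P => by
      obtain ⟨Q, h1, h2⟩ := hB P y y.2
      exact ⟨Q, h2, h1⟩⟩)
  let I := Order.idealOfCofinals P0 D
  have hI := Order.cofinal_meets_idealOfCofinals P0 D
  have hf : ∀ m : M, ∃ y, ∃ Q ∈ I, (m, y) ∈ Q.1 := by
    intro m
    obtain ⟨Q, ⟨y, hy⟩, h2⟩ := hI (Sum.inl m)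
    exact ⟨y, Q, h2, hy⟩
  choose g hg using hf
  have hb : ∀ y ∈ B, ∃ m, ∃ Q ∈ I, (m, y) ∈ Q.1 := by
    intro y hy
    obtain ⟨Q, ⟨m, hm⟩, h2⟩ := hI (Sum.inr ⟨y, hy⟩)
    exact ⟨m, Q, h2, hm⟩
  have hdir : ∀ {ι : Type} [Finite ι] (c : ι → M × N), (∀ i, ∃ Q ∈ I, c i ∈ Q.1) →
      ∃ Q ∈ I, ∀ i, c i ∈ Q.1 := by
    intro ι _ c hc
    choose Q hQ hc using hc
    have hd : Directed (· ≤ ·) (fun x : I => x) := directedOn_iff_directed.1 I.directed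
    have : Nonempty I := ⟨⟨P0, Order.mem_idealOfCofinals P0 D⟩⟩
    obtain ⟨z, hz⟩ := hd.finite_le (fun i => (⟨Q i, hQ i⟩ : I))
    exact ⟨z.1, z.2, fun i => (hz i : (Q i).1 ⊆ z.1.1) (hc i)⟩
  have hTE : ∀ {ι : Type} [Finite ι] (c : ι → M × N), (∀ i, ∃ Q ∈ I, c i ∈ Q.1) →
      TE L (Sum.elim (fun i => (c i).1) a) (Sum.elim (fun i => (c i).2) a') := by
    intro ι _ c hc
    obtain ⟨Q, -, hQ⟩ := hdir c hc
    have := Q.2.comp (Sum.map (fun i => ⟨c i, hQ i⟩) id : ι ⊕ Fin n → Q.1 ⊕ Fin n)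
    have e1 : (Sum.elim (fun x : Q.1 => x.1.1) a) ∘
      (Sum.map (fun i => ⟨c i, hQ i⟩) id : ι ⊕ Fin n → Q.1 ⊕ Fin n) =
      Sum.elim (fun i => (c i).1) a := by ext x; cases x <;> rfl
    have e2 : (Sum.elim (fun x : Q.1 => x.1.2) a') ∘
      (Sum.map (fun i => ⟨c i, hQ i⟩) id : ι ⊕ Fin n → Q.1 ⊕ Fin n) =
      Sum.elim (fun i => (c i).2) a' := by ext x; cases x <;> rfl
    rwa [e1, e2] at this
  refine ⟨⟨g, ?_⟩, ?_, ?_⟩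
  · intro k φ x
    have := (hTE (fun i => (x i, g (x i))) (fun i => hg (x i))).comp Sum.inl
    exact (this φ).symm
  · intro i
    have := hTE (fun _ : Unit => (a i, g (a i))) (fun _ => hg (a i))
    have := (this (Term.equal (Term.var (Sum.inl ())) (Term.var (Sum.inr i)))).1 (by simp)
    exact (by simpa using this : g (a i) = a' i)
  · intro y hy
    obtain ⟨m, hm⟩ := hb y hy
    refine ⟨m, ?_⟩
    have := hTE (fun b : Bool => if b then (m, g m) else (m, y)) (by
      intro b; cases b
      · simpa using hm
      · simpa using hg m)
    have := (this (Term.equal (Term.var (Sum.inl true)) (Term.var (Sum.inl false)))).1 (by simp)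
    exact (by simpa using this : g m = y)

theorem iso_of_atomic [Countable M] [Countable N] {n : ℕ} {a : Fin n → M} {a' : Fin n → N}
    (ha : AtomicOver L a) (ha' : AtomicOver L a') (h : TE L a a') : Nonempty (M ≃[L] N) := by
  obtain ⟨g, -, hg⟩ := bf_main ha h Set.univ (fun P y _ => bf_back ha' P y)
  have hs : Function.Surjective g := fun y => hg (Set.mem_univ y)
  exact ⟨{ Equiv.ofBijective g ⟨g.injective, hs⟩ with
    map_fun' := fun f x => g.map_fun f x
    map_rel' := fun r x => g.map_rel r x }⟩

end BackForth

end KimPaper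

namespace KimPaper

open Language

section Types

variable {L : FirstOrder.Language.{0, 0}} {T : L.Theory} {α β γ : Type}

theorem compactSpace_completeType (T : L.Theory) (α : Type) : CompactSpace (T.CompleteType α) := by
  constructor
  rw [isCompact_iff_ultrafilter_le_nhds]
  intros F _
  refine ⟨⟨{φ | T.typesWith φ ∈ F}, ?_, ?_⟩, ?_⟩
  · intro φ x
    exact F.mem_of_superset Filter.univ_mem (fun p _ ↦ p.subset x)
  · rw [Theory.IsMaximal, Theory.isSatisfiable_iff_isFinitelySatisfiable]
    refine ⟨?_, ?_⟩
    · rw [Theory.IsFinitelySatisfiable]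
      intro x hx
      have : ∀ φ ∈ x, T.typesWith φ ∈ F.toFilter := by intro φ hφ; exact hx hφ
      rw [← Filter.biInter_finset_mem x] at this
      obtain ⟨T, T_inter⟩ := F.neBot.nonempty_of_mem this
      have subset : (x : Set _) ⊆ T.toTheory := by rwa [Set.mem_iInter₂] at T_inter
      exact T.isMaximal.1.mono subset
    · intro φ
      simp only [Set.mem_ofPred_eq, Theory.CompleteType.typesWith_not]
      exact Ultrafilter.mem_or_compl_mem F (T.typesWith φ)
  · refine ⟨Set.mem_univ _, ?_⟩
    · refine CompleteType.isTopologicalBasis_range_typesWith.nhds_hasBasis.ge_iff.2 ?_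
      rintro _ ⟨⟨φ, rfl⟩, hφ⟩
      exact hφ

theorem typeOf_eq_iff {M N : Type} [L.Structure M] [L.Structure N] [Nonempty M] [Nonempty N]
    [M ⊨ T] [N ⊨ T] (u : α → M) (u' : α → N) :
    T.typeOf u = T.typeOf u' ↔ TE L u u' := by
  constructor
  · intro h ψ
    rw [← Theory.CompleteType.formula_mem_typeOf (T := T), h,
      Theory.CompleteType.formula_mem_typeOf]
  · intro h
    refine SetLike.ext fun φ => ?_
    rw [Theory.CompleteType.mem_typeOf, Theory.CompleteType.mem_typeOf]
    exact h _

theorem exists_realizes (p : T.CompleteType α) :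
    ∃ (N : Theory.ModelType.{0, 0, 0} T) (v : α → N), T.typeOf v = p := by
  obtain ⟨N, v, hv⟩ := T.exists_modelType_is_realized_in p
  exact ⟨N, v, hv⟩

/-- Compactness. -/
theorem compact_realize (Γ : Set (L.Formula α))
    (h : ∀ s : Finset (L.Formula α), ↑s ⊆ Γ →
      ∃ (N : Theory.ModelType.{0, 0, 0} T) (v : α → N), ∀ φ ∈ s, φ.Realize v) :
    ∃ (N : Theory.ModelType.{0, 0, 0} T) (v : α → N), ∀ φ ∈ Γ, φ.Realize v := by
  have := compactSpace_completeType T α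
  have h1 : (⋂ φ : Γ, T.typesWith (Formula.equivSentence φ.1)).Nonempty := by
    apply CompactSpace.iInter_nonempty
    · intro i
      exact CompleteType.isClosed_typesWith _
    · intro s
      obtain ⟨N, v, hv⟩ := h (s.map (Function.Embedding.subtype _)) (by intro x; simp; tauto)
      refine ⟨T.typeOf v, ?_⟩
      simp only [Set.mem_iInter]
      intro i hi
      rw [Theory.CompleteType.mem_typesWith_iff, Theory.CompleteType.formula_mem_typeOf]
      exact hv _ (by simp [hi])
  obtain ⟨p, hp⟩ := h1
  obtain ⟨N, v, rfl⟩ := exists_realizes p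
  refine ⟨N, v, fun φ hφ => ?_⟩
  have := Set.mem_iInter.1 hp ⟨φ, hφ⟩
  rwa [Theory.CompleteType.mem_typesWith_iff, Theory.CompleteType.formula_mem_typeOf] at this

/-- Density of isolated types when there are only countably many types. -/
theorem density [Finite α] [Countable (T.CompleteType (α ⊕ β))]
    {M : Type} [L.Structure M] [Nonempty M] [M ⊨ T]
    (w : β → M) (φ : L.Formula (α ⊕ β)) (v : α → M) (hv : φ.Realize (Sum.elim v w)) :
    ∃ v' : α → M, φ.Realize (Sum.elim v' w) ∧ Iso L v' w := by
  have := compactSpace_completeType T (α ⊕ β)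
  let K : Set (T.CompleteType (α ⊕ β)) := T.typesWith (Formula.equivSentence φ) ∩
    ⋂ ψ : {ψ : L.Formula β // ψ.Realize w},
      T.typesWith (Formula.equivSentence (ψ.1.relabel Sum.inr))
  have hK : IsClosed K := (CompleteType.isClosed_typesWith _).inter
    (isClosed_iInter fun _ => CompleteType.isClosed_typesWith _)
  have memK : ∀ {N : Type} [L.Structure N] [Nonempty N] [N ⊨ T] (u : α → N) (x : β → N),
      T.typeOf (Sum.elim u x) ∈ K ↔ φ.Realize (Sum.elim u x) ∧ TE L w x := by
    intro N _ _ _ u x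
    simp only [K, Set.mem_inter_iff, Set.mem_iInter, Theory.CompleteType.mem_typesWith_iff,
      Theory.CompleteType.formula_mem_typeOf, Formula.realize_relabel, Sum.elim_comp_inr]
    refine and_congr_right fun _ => ⟨fun h => TE.of_imp fun ψ hψ => h ⟨ψ, hψ⟩,
      fun h ψ => (h ψ.1).1 ψ.2⟩
  have : CompactSpace K := isCompact_iff_compactSpace.1 hK.isCompact
  have : Nonempty K := ⟨⟨T.typeOf (Sum.elim v w), (memK v w).2 ⟨hv, fun _ => Iff.rfl⟩⟩⟩
  obtain ⟨p, q, hq⟩ := nonempty_interior_of_iUnion_of_closed (X := K)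
    (f := fun p : K => {p}) (fun _ => isClosed_singleton) (by ext; simp)
  have hqp : q = p := Set.mem_singleton_iff.1 (interior_subset hq)
  subst hqp
  obtain ⟨U, hU, hUq⟩ := isOpen_induced_iff.1 (isOpen_interior (s := ({q} : Set K)))
  have hqU : q.1 ∈ U := by
    have : q ∈ Subtype.val ⁻¹' U := by rw [hUq]; exact hq
    exact this
  obtain ⟨_, ⟨θ, rfl⟩, hqθ, hθU⟩ :=
    CompleteType.isTopologicalBasis_range_typesWith.exists_subset_of_mem_open hqU hU
  have huniq : ∀ r ∈ K, r ∈ T.typesWith θ → r = q.1 := by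
    intro r hr hrθ
    have : (⟨r, hr⟩ : K) ∈ Subtype.val ⁻¹' U := hθU hrθ
    rw [hUq] at this
    have : (⟨r, hr⟩ : K) = q := Set.mem_singleton_iff.1 (interior_subset this)
    exact congrArg Subtype.val this
  obtain ⟨N, u, hu⟩ := exists_realizes q.1
  obtain ⟨u1, u2, rfl⟩ : ∃ u1 u2, u = Sum.elim u1 u2 :=
    ⟨u ∘ Sum.inl, u ∘ Sum.inr, (Sum.elim_comp_inl_inr u).symm⟩
  have hq1 := q.2
  rw [← hu] at hq1 hqθ
  obtain ⟨hq2, hq3⟩ := (memK u1 u2).1 hq1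
  rw [Theory.CompleteType.mem_typesWith_iff, Theory.CompleteType.mem_typeOf] at hqθ
  set χ := φ ⊓ Formula.equivSentence.symm θ with hχ
  have hal : ∀ x : α → M, χ.Realize (Sum.elim x w) → T.typeOf (Sum.elim x w) = q.1 := by
    intro x hx
    rw [hχ, Formula.realize_inf] at hx
    refine huniq _ ((memK x w).2 ⟨hx.1, fun _ => Iff.rfl⟩) ?_
    rw [Theory.CompleteType.mem_typesWith_iff, Theory.CompleteType.mem_typeOf]
    exact hx.2
  obtain ⟨v', hv'⟩ := hq3.symm.exists χ (v := u1) (Formula.realize_inf.2 ⟨hq2, hqθ⟩)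
  refine ⟨v', (Formula.realize_inf.1 hv').1, χ, hv', fun v'' hv'' ψ hψ => ?_⟩
  exact ((typeOf_eq_iff (T := T) _ _).1 ((hal v' hv').trans (hal v'' hv'').symm) ψ).1 hψ

/-- Löwenheim–Skolem: a tuple in a countable model. -/
theorem exists_countable_model (hL : L.card ≤ ℵ₀) (N : Theory.ModelType.{0, 0, 0} T)
    (hN : Infinite N) [Countable α] (v : α → N) :
    ∃ (N' : Theory.ModelType.{0, 0, 0} T) (v' : α → N'), Countable N' ∧ TE L v v' := by
  obtain ⟨S, hS, hc⟩ := exists_elementarySubstructure_card_eq L (Set.range v) ℵ₀ le_rfl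
    (by rw [lift_le, mk_le_aleph0_iff]; exact Set.countable_range v) (by simpa using hL) (by simp)
  have hcS : Countable S := by
    rw [← mk_le_aleph0_iff]
    simpa using hc.le
  have : Nonempty S := by
    rw [← mk_ne_zero_iff]
    intro h
    simp [h, aleph0_ne_zero.symm] at hc
  refine ⟨Theory.ModelType.of T S, fun i => (⟨v i, hS ⟨i, rfl⟩⟩ : S), hcS, ?_⟩
  intro ψ
  exact S.subtype.map_formula ψ (fun i => (⟨v i, hS ⟨i, rfl⟩⟩ : S))

theorem countable_types (hL : L.card ≤ ℵ₀)
    (hinf : ∀ N : Theory.ModelType.{0, 0, 0} T, Infinite N)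
    (hfin : numCountableModels L T < ℵ₀) (α : Type) [Finite α] :
    Countable (T.CompleteType α) := by
  have : Finite (Quotient (cmSetoid L T)) := Cardinal.lt_aleph0_iff_finite.1 hfin
  have hc : ∀ q : Quotient (cmSetoid L T), Countable q.out.1 := fun q => q.out.2.1
  let F : (Σ q : Quotient (cmSetoid L T), (α → q.out.1)) → T.CompleteType α :=
    fun x => T.typeOf x.2
  have hF : Function.Surjective F := by
    intro p
    obtain ⟨N, v, rfl⟩ := exists_realizes p
    obtain ⟨N', v', hN', ht⟩ := exists_countable_model hL N (hinf N) v
    let q : Quotient (cmSetoid L T) := Quotient.mk _ ⟨N', hN', hinf N'⟩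
    obtain ⟨e⟩ : Nonempty (N' ≃[L] q.out.1) :=
      Quotient.exact (s := cmSetoid L T) (Quotient.out_eq q).symm
    refine ⟨⟨q, e ∘ v'⟩, ?_⟩
    refine (typeOf_eq_iff _ _).2 (TE.symm (ht.trans ?_))
    intro ψ
    exact (StrongHomClass.realize_formula e ψ).symm
  exact hF.countable

end Types

end KimPaper

namespace KimPaper

open Language

section Atomic

variable {L : FirstOrder.Language.{0, 0}} {T : L.Theory} {α β γ : Type}

/-- Finite sets isolated over `a`. -/
def AtState (L : FirstOrder.Language.{0, 0}) {N : Type} [L.Structure N]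
    {n : ℕ} (a : Fin n → N) : Type :=
  {S : Finset N // Iso L (fun x : S => x.1) a}

instance {N : Type} [L.Structure N] {n : ℕ} (a : Fin n → N) : Preorder (AtState L a) :=
  Subtype.preorder _

theorem at_step (hct : ∀ (α : Type) [Finite α], Countable (T.CompleteType α))
    {N : Type} [L.Structure N] [Nonempty N] [N ⊨ T] {n : ℕ} {a : Fin n → N}
    (S : AtState L a) {k : ℕ} (φ : L.BoundedFormula Empty (k + 1)) (c : Fin k → N)
    (hc : ∀ i, c i ∈ S.1) (x : N)
    (hx : φ.Realize default (Fin.snoc c x : Fin (k + 1) → N)) :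
    ∃ S' : AtState L a, S ≤ S' ∧
      ∃ y ∈ S'.1, φ.Realize default (Fin.snoc c y : Fin (k + 1) → N) := by
  classical
  have := hct (Unit ⊕ (S.1 ⊕ Fin n))
  let g : Empty ⊕ Fin (k + 1) → Unit ⊕ (S.1 ⊕ Fin n) :=
    Sum.elim Empty.elim (Fin.snoc (α := fun _ => Unit ⊕ (S.1 ⊕ Fin n))
      (fun i => Sum.inr (Sum.inl ⟨c i, hc i⟩)) (Sum.inl ()))
  have hg : ∀ y : Unit → N, (φ.toFormula.relabel g).Realize
      (Sum.elim y (Sum.elim (fun x : S.1 => x.1) a)) ↔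
      φ.Realize default (Fin.snoc c (y ()) : Fin (k + 1) → N) := by
    intro y
    rw [Formula.realize_relabel, BoundedFormula.realize_toFormula]
    have e1 : ((Sum.elim y (Sum.elim (fun x : S.1 => x.1) a)) ∘ g) ∘ Sum.inl =
      (default : Empty → N) := Subsingleton.elim _ _
    have e2 : ((Sum.elim y (Sum.elim (fun x : S.1 => x.1) a)) ∘ g) ∘ Sum.inr =
      (Fin.snoc c (y ()) : Fin (k + 1) → N) := by
      ext i
      refine Fin.lastCases ?_ (fun i => ?_) i
      · simp [g]
      · simp [g]
    rw [e1, e2]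
  obtain ⟨y, hy, hiso⟩ := density (T := T) (Sum.elim (fun x : S.1 => x.1) a)
    (φ.toFormula.relabel g) (fun _ => x) ((hg _).2 hx)
  have hiso2 := hiso.trans S.2
  let f : ↥(insert (y ()) S.1) → Unit ⊕ S.1 :=
    fun z => if hz : z.1 ∈ S.1 then Sum.inr ⟨z.1, hz⟩ else Sum.inl ()
  have hf : Sum.elim y (fun x : S.1 => x.1) ∘ f = fun z : ↥(insert (y ()) S.1) => z.1 := by
    ext ⟨z, hz⟩
    by_cases h : z ∈ S.1
    · simp [f, h]
    · have := (Finset.mem_insert.1 hz).resolve_right h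
      subst this
      simp [f, h]
  have hiso3 := hiso2.comp f
  rw [hf] at hiso3
  exact ⟨⟨_, hiso3⟩, Finset.subset_insert (y ()) S.1, y (), Finset.mem_insert_self _ _,
    (hg y).1 hy⟩

theorem exists_atomic (hL : L.card ≤ ℵ₀)
    (hct : ∀ (α : Type) [Finite α], Countable (T.CompleteType α))
    (N : Theory.ModelType.{0, 0, 0} T) [Countable N] {n : ℕ} (a : Fin n → N) :
    ∃ (M : Theory.ModelType.{0, 0, 0} T) (a' : Fin n → M), Countable M ∧
      AtomicOver L a' ∧ TE L a a' := by
  classical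
  have : Countable L.Symbols := mk_le_aleph0_iff.1 hL
  have hcb : ∀ k, Countable (L.BoundedFormula Empty k) := fun k =>
    (sigma_mk_injective (β := fun k => L.BoundedFormula Empty k) (i := k)).countable
  let ι := Σ k : ℕ, L.BoundedFormula Empty (k + 1) × (Fin k → N)
  have : Countable ι := inferInstance
  let _ : Encodable ι := Encodable.ofCountable _
  let P0 : AtState L a := ⟨Finset.univ.image a, by
    have h : ∀ x : ↥(Finset.univ.image a), ∃ i, a i = x.1 := by
      rintro ⟨x, hx⟩
      simpa using hx
    choose f hf using h
    have := Iso.refl (L := L) a f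
    have e : a ∘ f = fun x => x.1 := funext hf
    rwa [e] at this⟩
  let good : ι → AtState L a → Prop := fun d S =>
    (∀ i, d.2.2 i ∈ S.1) ∧
      ((∃ x, d.2.1.Realize default (Fin.snoc d.2.2 x : Fin (d.1 + 1) → N)) →
        ∃ y ∈ S.1, d.2.1.Realize default (Fin.snoc d.2.2 y : Fin (d.1 + 1) → N))
  let D : ι → Order.Cofinal (AtState L a) := fun d =>
    ⟨{S | good d S ∨ ¬ ∃ S' : AtState L a, S ≤ S' ∧ ∀ i, d.2.2 i ∈ S'.1}, by
      intro S
      by_cases h : ∃ S' : AtState L a, S ≤ S' ∧ ∀ i, d.2.2 i ∈ S'.1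
      · obtain ⟨S', hS', hd⟩ := h
        by_cases hx : ∃ x, d.2.1.Realize default (Fin.snoc d.2.2 x : Fin (d.1 + 1) → N)
        · obtain ⟨x, hx⟩ := hx
          obtain ⟨S'', h1, h2⟩ := at_step hct S' d.2.1 d.2.2 hd x hx
          exact ⟨S'', Or.inl ⟨fun i => (h1 : S'.1 ⊆ S''.1) (hd i), fun _ => h2⟩, hS'.trans h1⟩
        · exact ⟨S', Or.inl ⟨hd, fun h => absurd h hx⟩, hS'⟩
      · exact ⟨S, Or.inr h, le_rfl⟩⟩
  let I := Order.idealOfCofinals P0 D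
  have hI := Order.cofinal_meets_idealOfCofinals P0 D
  have hdir : ∀ {ι : Type} [Finite ι] (c : ι → N), (∀ i, ∃ Q ∈ I, c i ∈ Q.1) →
      ∃ Q ∈ I, ∀ i, c i ∈ Q.1 := by
    intro ι _ c hc
    choose Q hQ hc using hc
    have hd : Directed (· ≤ ·) (fun x : I => x) := directedOn_iff_directed.1 I.directed
    have : Nonempty I := ⟨⟨P0, Order.mem_idealOfCofinals P0 D⟩⟩
    obtain ⟨z, hz⟩ := hd.finite_le (fun i => (⟨Q i, hQ i⟩ : I))
    exact ⟨z.1, z.2, fun i => (hz i : (Q i).1 ⊆ z.1.1) (hc i)⟩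
  let A : Set N := {x | ∃ Q ∈ I, x ∈ Q.1}
  have hwit : ∀ (k : ℕ) (φ : L.BoundedFormula Empty (k + 1)) (c : Fin k → N), (∀ i, c i ∈ A) →
      ∀ x, φ.Realize default (Fin.snoc c x : Fin (k + 1) → N) →
        ∃ y ∈ A, φ.Realize default (Fin.snoc c y : Fin (k + 1) → N) := by
    intro k φ c hc x hx
    obtain ⟨Q, hQ, hcQ⟩ := hdir c hc
    obtain ⟨S, hS, hSI⟩ := hI ⟨k, φ, c⟩
    rcases hS with hS | hS
    · obtain ⟨y, hy, h⟩ := hS.2 ⟨x, hx⟩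
      exact ⟨y, ⟨S, hSI, hy⟩, h⟩
    · obtain ⟨R, -, hR1, hR2⟩ := I.directed S hSI Q hQ
      exact absurd ⟨R, hR1, fun i => (hR2 : Q.1 ⊆ R.1) (hcQ i)⟩ hS
  let S : L.Substructure N := ⟨A, by
    intro k f x hx
    obtain ⟨y, hy, h⟩ := hwit k
      ((Term.var (Sum.inr (Fin.last k))).bdEqual
        (Term.func f (fun i => Term.var (Sum.inr i.castSucc)))) x hx (Structure.funMap f x)
      (by simp)
    simp at h
    rwa [← h]⟩
  let E : L.ElementarySubstructure N := S.toElementarySubstructure (by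
    intro k φ x b hb
    obtain ⟨y, hy, h⟩ := hwit k φ (fun i => (x i).1) (fun i => (x i).2) b hb
    exact ⟨⟨y, hy⟩, h⟩)
  have haE : ∀ i, a i ∈ E := fun i =>
    ⟨P0, Order.mem_idealOfCofinals P0 D, Finset.mem_image_of_mem _ (Finset.mem_univ i)⟩
  have hmap : ∀ {δ : Type} (u : δ → E), TE L u (fun i => (u i).1) := fun u ψ =>
    (E.subtype.map_formula ψ u).symm
  refine ⟨Theory.ModelType.of T E, fun i => (⟨a i, haE i⟩ : E), ?_, ?_, ?_⟩
  · exact Subtype.countable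
  · intro k (c : Fin k → E)
    obtain ⟨Q, -, hcQ⟩ := hdir (fun i => (c i).1) (fun i => (c i).2)
    have h1 := Q.2.comp (fun i : Fin k => (⟨(c i).1, hcQ i⟩ : Q.1))
    have h2 : Iso L (fun i => (c i).1) a := h1
    refine h2.of_TE ?_
    have := (hmap (Sum.elim c (fun i => (⟨a i, haE i⟩ : E)))).symm
    have e : (fun i => (Sum.elim c (fun i => (⟨a i, haE i⟩ : E)) i).1) =
        Sum.elim (fun i => (c i).1) a := by
      ext z; cases z <;> rfl
    rw [e] at this
    exact this
  · exact (hmap (fun i => (⟨a i, haE i⟩ : E))).symm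

end Atomic

end KimPaper

namespace KimPaper

open Language

section Final

variable {L : FirstOrder.Language.{0, 0}} {T : L.Theory} {α β γ : Type}

theorem TE_empty (hT : T.IsComplete) (M N : Theory.ModelType.{0, 0, 0} T) [IsEmpty γ]
    (u : γ → M) (u' : γ → N) : TE L u u' := by
  intro ψ
  have h := (hT.realize_sentence_iff (ψ.relabel (isEmptyElim : γ → Empty)) M).trans
    (hT.realize_sentence_iff (ψ.relabel (isEmptyElim : γ → Empty)) N).symm
  unfold Sentence.Realize at h
  rw [Formula.realize_relabel, Formula.realize_relabel] at h
  rw [Subsingleton.elim u ((default : Empty → M) ∘ (isEmptyElim : γ → Empty)),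
    Subsingleton.elim u' ((default : Empty → N) ∘ (isEmptyElim : γ → Empty))]
  exact h

theorem exists_of_complete (hT : T.IsComplete) (M N : Theory.ModelType.{0, 0, 0} T) [Finite α]
    (φ : L.Formula α) (u : α → M) (h : φ.Realize u) : ∃ v : α → N, φ.Realize v := by
  have := (TE_empty hT M N (Fin.elim0 : Fin 0 → M) (Fin.elim0 : Fin 0 → N)).exists
    (φ.relabel Sum.inl) (v := u) (by simpa using h)
  simpa using this

theorem joint (hT : T.IsComplete) {r : ℕ} (kk : Fin r → ℕ)
    (NN : Fin r → Theory.ModelType.{0, 0, 0} T) (c : ∀ i, Fin (kk i) → NN i) :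
    ∃ (N : Theory.ModelType.{0, 0, 0} T) (v : (Σ i, Fin (kk i)) → N),
      ∀ i, TE L (c i) (fun j => v ⟨i, j⟩) := by
  classical
  obtain ⟨N₀⟩ := hT.1
  let Γ : Set (L.Formula (Σ i, Fin (kk i))) :=
    {γ | ∃ i, ∃ φ : L.Formula (Fin (kk i)), φ.Realize (c i) ∧ γ = φ.relabel (Sigma.mk i)}
  obtain ⟨N, v, hv⟩ := compact_realize (T := T) Γ (by
    intro s hs
    let F : ∀ i : Fin r, s → L.Formula (Fin (kk i)) := fun i γ =>
      if h : ∃ φ : L.Formula (Fin (kk i)), φ.Realize (c i) ∧ γ.1 = φ.relabel (Sigma.mk i) then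
        h.choose else ⊤
    have hF : ∀ i, ∃ v : Fin (kk i) → N₀, (Formula.iInf (F i)).Realize v := by
      intro i
      apply exists_of_complete hT (NN i) N₀ _ (c i)
      rw [Formula.realize_iInf]
      intro γ
      by_cases h : ∃ φ : L.Formula (Fin (kk i)), φ.Realize (c i) ∧ γ.1 = φ.relabel (Sigma.mk i)
      · simp only [F, dif_pos h]
        exact h.choose_spec.1
      · simp only [F, dif_neg h]
        exact Formula.realize_top.2 trivial
    choose v hv using hF
    refine ⟨N₀, fun x => v x.1 x.2, fun γ hγ => ?_⟩
    obtain ⟨i, hi⟩ := hs hγ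
    have h2 := Formula.realize_iInf.1 (hv i) ⟨γ, hγ⟩
    simp only [F, dif_pos hi] at h2
    rw [hi.choose_spec.2, Formula.realize_relabel]
    exact h2)
  refine ⟨N, v, fun i => TE.of_imp fun φ hφ => ?_⟩
  have := hv _ ⟨i, φ, hφ, rfl⟩
  rw [Formula.realize_relabel] at this
  exact this

/-- Every type is realized in `M`. -/
def Full (L : FirstOrder.Language.{0, 0}) (T : L.Theory) (M : Type) [L.Structure M] : Prop :=
  ∀ (N : Theory.ModelType.{0, 0, 0} T) (k : ℕ) (c : Fin k → N), ∃ c' : Fin k → M, TE L c c'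

theorem exists_powerful (hL : L.card ≤ ℵ₀) (hT : T.IsComplete)
    (hinf : ∀ N : Theory.ModelType.{0, 0, 0} T, Infinite N)
    (hfin : numCountableModels L T < ℵ₀) :
    ∃ (n : ℕ) (M : Theory.ModelType.{0, 0, 0} T) (a : Fin n → M), Countable M ∧
      AtomicOver L a ∧ Full L T M := by
  classical
  have hct := countable_types hL hinf hfin
  have : Finite (Quotient (cmSetoid L T)) := Cardinal.lt_aleph0_iff_finite.1 hfin
  obtain ⟨r, ⟨e⟩⟩ := Finite.exists_equiv_fin (Quotient (cmSetoid L T))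
  have hch : ∀ i : Fin r, ∃ (k : ℕ) (N : Theory.ModelType.{0, 0, 0} T) (c : Fin k → N),
      ¬ Full L T (e.symm i).out.1 → ¬ ∃ c' : Fin k → (e.symm i).out.1, TE L c c' := by
    intro i
    by_cases h : Full L T (e.symm i).out.1
    · exact ⟨0, (e.symm i).out.1, Fin.elim0, fun h' => absurd h h'⟩
    · have h' := h
      unfold Full at h'
      push Not at h'
      obtain ⟨N, k, c, hc⟩ := h'
      exact ⟨k, N, c, fun _ ⟨c', h⟩ => hc c' h⟩
  choose kk NN c hc using hch
  obtain ⟨N, v, hv⟩ := joint hT kk NN c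
  obtain ⟨N', v', hN', hvv'⟩ := exists_countable_model hL N (hinf N) v
  obtain ⟨n, ⟨f⟩⟩ := Finite.exists_equiv_fin (Σ i, Fin (kk i))
  obtain ⟨M, a, hM, hat, hTE⟩ := exists_atomic hL hct N' (v' ∘ f.symm)
  refine ⟨n, M, a, hM, hat, ?_⟩
  by_contra hnf
  let q : Quotient (cmSetoid L T) := Quotient.mk _ ⟨M, hM, hinf M⟩
  obtain ⟨g⟩ : Nonempty (M ≃[L] (e.symm (e q)).out.1) := by
    rw [e.symm_apply_apply]
    exact Quotient.exact (s := cmSetoid L T) (Quotient.out_eq q).symm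
  have hg : ∀ {δ : Type} (u : δ → M), TE L u (g ∘ u) := fun u ψ =>
    (StrongHomClass.realize_formula g ψ).symm
  have hg' : ∀ {δ : Type} (u : δ → (e.symm (e q)).out.1), TE L u (g.symm ∘ u) := fun u ψ =>
    (StrongHomClass.realize_formula g.symm ψ).symm
  refine hc (e q) ?_ ?_
  · intro hF
    apply hnf
    intro N k c
    obtain ⟨c', h⟩ := hF N k c
    exact ⟨_, h.trans (hg' c')⟩
  · let s : Fin (kk (e q)) → (Σ i, Fin (kk i)) := fun j => ⟨e q, j⟩
    refine ⟨g ∘ (a ∘ f ∘ s), TE.trans ?_ (hg _)⟩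
    have h1 := (hvv'.comp (s))
    have h2 := hTE.comp (f ∘ s)
    have e1 : (v' ∘ f.symm) ∘ f ∘ s = v' ∘ s := by
      ext; simp
    rw [e1] at h2
    exact (hv (e q)).trans (h1.trans h2)

theorem iso0_of_isolated0 {M : Type} [L.Structure M] {n : ℕ} {a : Fin n → M}
    (h : Isolated0 L a) : Iso L a (Fin.elim0 : Fin 0 → M) := by
  obtain ⟨φ, h1, h2⟩ := h
  refine ⟨φ.relabel Sum.inl, by simpa using h1, fun v' hv' ψ hψ => ?_⟩
  have e1 : ∀ v : Fin n → M, v ∘ (Sum.elim id Fin.elim0 : Fin n ⊕ Fin 0 → Fin n) =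
      Sum.elim v Fin.elim0 := by
    intro v; ext z; rcases z with z | z
    · rfl
    · exact z.elim0
  have := h2 v' (by simpa using hv') (ψ.relabel (Sum.elim id Fin.elim0))
  rw [Formula.realize_relabel, Formula.realize_relabel, e1, e1] at this
  exact this hψ

theorem not_isolated (hL : L.card ≤ ℵ₀) (hT : T.IsComplete)
    (hinf : ∀ N : Theory.ModelType.{0, 0, 0} T, Infinite N)
    (hncat : numCountableModels L T ≠ 1)
    {n : ℕ} (M : Theory.ModelType.{0, 0, 0} T) [Countable M] (a : Fin n → M)
    (hat : AtomicOver L a) (hF : Full L T M) : ¬ Isolated0 L a := by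
  intro hiso
  apply hncat
  have h0 := iso0_of_isolated0 hiso
  have hatM : AtomicOver L (Fin.elim0 : Fin 0 → M) := by
    intro k c
    have h1 : Iso L c (Sum.elim a (Fin.elim0 : Fin 0 → M)) := by
      have := (hat k c).congr_right (Equiv.sumEmpty (Fin n) (Fin 0))
      have e : a ∘ (Equiv.sumEmpty (Fin n) (Fin 0)) = Sum.elim a (Fin.elim0 : Fin 0 → M) := by
        ext z; rcases z with z | z
        · rfl
        · exact z.elim0
      rwa [e] at this
    exact (h1.trans h0).comp Sum.inl
  have hatN : ∀ N : Theory.ModelType.{0, 0, 0} T, AtomicOver L (Fin.elim0 : Fin 0 → N) := by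
    intro N k c
    obtain ⟨c', h⟩ := hF N k c
    refine (hatM k c').of_TE ?_
    have := (h.symm).comp (Sum.elim id Fin.elim0 : Fin k ⊕ Fin 0 → Fin k)
    have e1 : c ∘ (Sum.elim id Fin.elim0 : Fin k ⊕ Fin 0 → Fin k) = Sum.elim c Fin.elim0 := by
      ext z; rcases z with z | z
      · rfl
      · exact z.elim0
    have e2 : c' ∘ (Sum.elim id Fin.elim0 : Fin k ⊕ Fin 0 → Fin k) = Sum.elim c' Fin.elim0 := by
      ext z; rcases z with z | z
      · rfl
      · exact z.elim0
    rwa [e1, e2] at this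
  unfold numCountableModels
  rw [Cardinal.eq_one_iff_unique]
  constructor
  · constructor
    intro x y
    induction x using Quotient.inductionOn with | _ x => ?_
    induction y using Quotient.inductionOn with | _ y => ?_
    have := x.2.1
    have := y.2.1
    exact Quotient.sound (s := cmSetoid L T)
      (iso_of_atomic (hatN x.1) (hatN y.1) (TE_empty hT x.1 y.1 _ _))
  · exact ⟨Quotient.mk _ ⟨M, inferInstance, hinf M⟩⟩

theorem exists_b {n : ℕ} (M : Theory.ModelType.{0, 0, 0} T) (a : Fin n → M)
    (hat : AtomicOver L a) (hF : Full L T M) (hni : ¬ Isolated0 L a) :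
    ∃ b : Fin n → M, TE L b a ∧ ¬ Iso L a b := by
  classical
  -- formulas `χ` with `χ(x, a)` implying `tp(a)`
  let good : L.Formula (Fin n ⊕ Fin n) → Prop := fun χ =>
    ∀ x : Fin n → M, χ.Realize (Sum.elim x a) → TE L a x
  let Γ : Set (L.Formula (Fin n ⊕ Fin n)) :=
    {γ | ∃ θ : L.Formula (Fin n), θ.Realize a ∧ ∃ χ, good χ ∧
      ∀ x : Fin n → M, θ.Realize x → ¬ χ.Realize (Sum.elim x a) → γ.Realize (Sum.elim x a)}
  have gbot : good ⊥ := fun x hx => absurd hx (by simp)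
  obtain ⟨N, v, hv⟩ := compact_realize (T := T) Γ (by
    intro s hs
    have key : ∃ θ : L.Formula (Fin n), θ.Realize a ∧ ∃ χ, good χ ∧
      ∀ x : Fin n → M, θ.Realize x → ¬ χ.Realize (Sum.elim x a) →
        ∀ γ ∈ s, γ.Realize (Sum.elim x a) := by
      induction s using Finset.induction_on with
      | empty => exact ⟨⊤, by simp, ⊥, gbot, by simp⟩
      | insert γ s hγ ih =>
        obtain ⟨θ, hθ, χ, hχ, h⟩ := ih (fun x hx => hs (by simp at hx ⊢; tauto))
        obtain ⟨θ', hθ', χ', hχ', h'⟩ := hs (Finset.mem_coe.2 (Finset.mem_insert_self γ s))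
        refine ⟨θ ⊓ θ', Formula.realize_inf.2 ⟨hθ, hθ'⟩, χ ⊔ χ', ?_, ?_⟩
        · intro x hx
          rcases Formula.realize_sup.1 hx with hx | hx
          · exact hχ x hx
          · exact hχ' x hx
        · intro x hx hx2 δ hδ
          rw [Formula.realize_inf] at hx
          rw [Formula.realize_sup, not_or] at hx2
          rcases Finset.mem_insert.1 hδ with rfl | hδ
          · exact h' x hx.2 hx2.2
          · exact h x hx.1 hx2.1 δ hδ
    obtain ⟨θ, hθ, χ, hχ, h⟩ := key
    have : ∃ x : Fin n → M, θ.Realize x ∧ ¬ χ.Realize (Sum.elim x a) := by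
      by_contra hc
      push Not at hc
      exact hni ⟨θ, hθ, fun x hx ψ hψ => (hχ x (hc x hx) ψ).1 hψ⟩
    obtain ⟨x, hx1, hx2⟩ := this
    exact ⟨M, Sum.elim x a, h x hx1 hx2⟩)
  obtain ⟨w, hw⟩ := hF N (n + n) (v ∘ finSumFinEquiv.symm)
  have hw' := hw.comp finSumFinEquiv
  have e : (v ∘ finSumFinEquiv.symm) ∘ finSumFinEquiv = v := by ext; simp
  rw [e] at hw'
  obtain ⟨a₁, b, hab⟩ : ∃ a₁ b, w ∘ finSumFinEquiv = Sum.elim a₁ b :=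
    ⟨_, _, (Sum.elim_comp_inl_inr (w ∘ finSumFinEquiv)).symm⟩
  rw [hab] at hw'
  have hΓ : ∀ γ ∈ Γ, γ.Realize (Sum.elim a₁ b) := fun γ hγ => (hw' γ).1 (hv γ hγ)
  have ta₁ : TE L a a₁ := TE.of_imp fun ψ hψ => by
    have := hΓ (ψ.relabel Sum.inl) ⟨ψ, hψ, ⊥, gbot, fun x hx _ => by simpa using hx⟩
    simpa using this
  have tb : TE L a b := TE.of_imp fun ψ hψ => by
    have := hΓ (ψ.relabel Sum.inr) ⟨⊤, by simp, ⊥, gbot, fun x hx _ => by simpa using hψ⟩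
    simpa using this
  have hnot : ∀ χ, good χ → ¬ χ.Realize (Sum.elim a₁ b) := fun χ hχ => by
    have := hΓ χ.not ⟨⊤, by simp, χ, hχ, fun x _ hx => by simpa using hx⟩
    simpa using this
  have hni1 : ¬ Iso L a₁ b := by
    rintro ⟨φ, hφ⟩
    refine hnot φ ?_ hφ.1
    intro x hx
    have := (hφ.key tb.symm hx).comp Sum.inl
    simp only [Sum.elim_comp_inl] at this
    exact ta₁.trans this
  refine ⟨b, tb.symm, fun hab' => hni1 ?_⟩
  have h1 : Iso L a₁ (Sum.elim b a) := (hat.iso (Sum.elim a₁ b)).right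
  have h2 : Iso L a₁ (Sum.elim a b) := by
    have := h1.congr_right (Equiv.sumComm (Fin n) (Fin n))
    have e : Sum.elim b a ∘ (Equiv.sumComm (Fin n) (Fin n)) = Sum.elim a b := by
      ext z; cases z <;> rfl
    rwa [e] at this
  exact (h2.trans hab').comp Sum.inl

end Final

/-- **Fact 3.1 (folklore).** Suppose the countable complete theory `T` is not
`ℵ₀`-categorical but has only finitely many countable models.  Then there are a
tuple `a` and a prime model `M₀` over `a` such that `tp(a)` is nonisolated and
every complete `n`-type of `T` over `∅` is realized in `M₀`; moreover there is
a tuple `b` in `M₀` with `tp(b) = tp(a)` and `tp(a/b)` nonisolated. -/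
theorem fact_3_1
    (L : FirstOrder.Language.{0, 0}) (T : L.Theory)
    (hL : L.card ≤ ℵ₀) (hT : T.IsComplete)
    (hinf : ∀ N : Language.Theory.ModelType.{0, 0, 0} T, Infinite N)
    (hncat : numCountableModels L T ≠ 1)
    (hfin : numCountableModels L T < ℵ₀) :
    ∃ (n : ℕ) (M₀ : Language.Theory.ModelType.{0, 0, 0} T) (a : Fin n → M₀),
      PrimeOver L T M₀ a ∧ ¬ Isolated0 L a ∧
      (∀ (N : Language.Theory.ModelType.{0, 0, 0} T) (k : ℕ) (c : Fin k → N),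
        ∃ c' : Fin k → M₀, TpEqCross L c c') ∧
      ∃ b : Fin n → M₀, TpEq L b a ∧ ¬ IsolatedOver L a b := by
  obtain ⟨n, M, a, hM, hat, hF⟩ := exists_powerful hL hT hinf hfin
  have hni := not_isolated hL hT hinf hncat M a hat hF
  refine ⟨n, M, a, ?_, hni, hF, exists_b M a hat hF hni⟩
  intro N a' h
  obtain ⟨g, hg, -⟩ := bf_main hat h ∅ (fun P y hy => absurd hy (Set.notMem_empty y))
  exact ⟨g, hg⟩

end KimPaper
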